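/- arXiv:2404.17359 — 2 statements merged into one kernel-verified Lean document; each statement's English description precedes it below -/
import Mathlib

section
/- Let D = ℝ^d \ S with S closed of measure zero, ρ a regularized distance to S with 0 < ρ ≤ 1, and {φ_{j,l}} a resolution of unity subordinate to a Whitney decomposition {Q_{j,k_l}} of D (supp φ_{j,l} ⊂ 2Q_{j,k_l}, |∂^α φ_{j,l}| ≤ c_α 2^{j|α|}, Σ φ_{j,l} = 1, uniformly bounded overlap). Then for all m ∈ ℕ₀, 1 < p < ∞, a ∈ ℝ and all u ∈ K^m_{a,p}(D): ‖u‖_{K^m_{a,p}(D)}^p ∼ Σ_{j,l} ‖φ_{j,l} u‖_{K^m_{a,p}(D)}^p, with implicit constants independent of u. -/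
open MeasureTheory Set

/-- The `p`-th power of the Kondratiev norm `‖u‖_{K^m_{a,p}(D)}^p`, with order-`n`
multiindex derivatives encoded via the iterated Fréchet derivative. -/
noncomputable def KondratievNormP {d : ℕ} (D : Set (EuclideanSpace ℝ (Fin d)))
    (ρ : EuclideanSpace ℝ (Fin d) → ℝ) (m : ℕ) (a p : ℝ)
    (u : EuclideanSpace ℝ (Fin d) → ℂ) : ENNReal :=
  ∑ n ∈ Finset.range (m + 1),
    ∫⁻ x in D, ENNReal.ofReal ((ρ x ^ ((n : ℝ) - a) * ‖iteratedFDeriv ℝ n u x‖) ^ p)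

/-- pointwise integrand -/
noncomputable def KG {d : ℕ} (m : ℕ) (a p r : ℝ)
    (u : EuclideanSpace ℝ (Fin d) → ℂ) (x : EuclideanSpace ℝ (Fin d)) : ℝ :=
  ∑ n ∈ Finset.range (m + 1), (r ^ ((n : ℝ) - a) * ‖iteratedFDeriv ℝ n u x‖) ^ p

lemma KG_nonneg {d : ℕ} (m : ℕ) (a p r : ℝ) (hr : 0 < r)
    (u : EuclideanSpace ℝ (Fin d) → ℂ) (x : EuclideanSpace ℝ (Fin d)) : 0 ≤ KG m a p r u x := by
  unfold KG; positivity

lemma leibniz_bound {d : ℕ} {U : Set (EuclideanSpace ℝ (Fin d))} (hU : IsOpen U)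
    {ψ : EuclideanSpace ℝ (Fin d) → ℝ} {u : EuclideanSpace ℝ (Fin d) → ℂ} {m n : ℕ}
    (hψ : ContDiffOn ℝ (m : ℕ∞) ψ U) (hu : ContDiffOn ℝ (m : ℕ∞) u U)
    {x : EuclideanSpace ℝ (Fin d)} (hx : x ∈ U) (hn : n ≤ m) :
    ‖iteratedFDeriv ℝ n (fun y => ψ y • u y) x‖ ≤ ∑ i ∈ Finset.range (n + 1),
      (n.choose i : ℝ) * ‖iteratedFDeriv ℝ i ψ x‖ * ‖iteratedFDeriv ℝ (n - i) u x‖ := by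
  have := norm_iteratedFDerivWithin_smul_le (𝕜 := ℝ) hψ hu hU.uniqueDiffOn hx (n := n)
    (by exact_mod_cast hn)
  simpa only [iteratedFDerivWithin_of_isOpen _ hU hx] using this

lemma KG_mul_le {d : ℕ} {U : Set (EuclideanSpace ℝ (Fin d))} (hU : IsOpen U)
    {ψ : EuclideanSpace ℝ (Fin d) → ℝ} {u : EuclideanSpace ℝ (Fin d) → ℂ} {m : ℕ}
    (hψ : ContDiffOn ℝ (m : ℕ∞) ψ U) (hu : ContDiffOn ℝ (m : ℕ∞) u U)
    {x : EuclideanSpace ℝ (Fin d)} (hx : x ∈ U) {a p r M : ℝ} (hp : 1 < p) (hr : 0 < r)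
    (hM : 0 < M) (hb : ∀ k ≤ m, ‖iteratedFDeriv ℝ k ψ x‖ * r ^ k ≤ M) :
    KG m a p r (fun y => ψ y • u y) x ≤
      ((m + 1 : ℕ) * ((2 ^ m * M) ^ p * ((m + 1 : ℕ) : ℝ) ^ (p - 1))) * KG m a p r u x := by
  have key : ∀ n ∈ Finset.range (m + 1),
      (r ^ ((n : ℝ) - a) * ‖iteratedFDeriv ℝ n (fun y => ψ y • u y) x‖) ^ p ≤
      ((2 ^ m * M) ^ p * ((m + 1 : ℕ) : ℝ) ^ (p - 1)) * KG m a p r u x := by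
    intro n hn
    have hn : n ≤ m := by simpa [Nat.lt_succ_iff] using hn
    have h1 : r ^ ((n : ℝ) - a) * ‖iteratedFDeriv ℝ n (fun y => ψ y • u y) x‖ ≤
        (2 ^ m * M) * ∑ k ∈ Finset.range (m + 1),
          r ^ ((k : ℝ) - a) * ‖iteratedFDeriv ℝ k u x‖ := by
      calc _ ≤ r ^ ((n : ℝ) - a) * ∑ i ∈ Finset.range (n + 1),
            (n.choose i : ℝ) * ‖iteratedFDeriv ℝ i ψ x‖ * ‖iteratedFDeriv ℝ (n - i) u x‖ := by
            gcongr
            exact leibniz_bound hU hψ hu hx hn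
        _ ≤ ∑ i ∈ Finset.range (n + 1), (2 ^ m * M) *
              (r ^ (((n - i : ℕ) : ℝ) - a) * ‖iteratedFDeriv ℝ (n - i) u x‖) := by
            rw [Finset.mul_sum]
            refine Finset.sum_le_sum fun i hi => ?_
            have hi : i ≤ n := by simpa [Nat.lt_succ_iff] using hi
            have e : r ^ ((n : ℝ) - a) = r ^ i * r ^ (((n - i : ℕ) : ℝ) - a) := by
              rw [← Real.rpow_natCast, ← Real.rpow_add hr]
              congr 1
              push_cast [hi]
              ring
            have hc : (n.choose i : ℝ) ≤ 2 ^ m := by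
              calc (n.choose i : ℝ) ≤ 2 ^ n := by exact_mod_cast Nat.choose_le_two_pow n i
                _ ≤ 2 ^ m := by gcongr; norm_num
            rw [e]
            calc _ = ((n.choose i : ℝ) * (‖iteratedFDeriv ℝ i ψ x‖ * r ^ i)) *
                  (r ^ (((n - i : ℕ) : ℝ) - a) * ‖iteratedFDeriv ℝ (n - i) u x‖) := by ring
              _ ≤ _ := by
                gcongr
                exact hb i (hi.trans hn)
        _ = (2 ^ m * M) * ∑ k ∈ Finset.range (n + 1),
              (r ^ ((k : ℝ) - a) * ‖iteratedFDeriv ℝ k u x‖) := by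
            rw [← Finset.mul_sum]
            congr 1
            rw [← Finset.sum_range_reflect]
            refine Finset.sum_congr rfl fun i hi => ?_
            have hi : i ≤ n := by simpa [Nat.lt_succ_iff] using hi
            have : n + 1 - 1 - i = n - i := by omega
            rw [this, Nat.sub_sub_self hi]
        _ ≤ _ := by
            have : n + 1 ≤ m + 1 := by omega
            refine mul_le_mul_of_nonneg_left ?_ (by positivity)
            exact Finset.sum_le_sum_of_subset_of_nonneg (Finset.range_mono this)
              (fun _ _ _ => by positivity)
    calc _ ≤ ((2 ^ m * M) * ∑ k ∈ Finset.range (m + 1),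
          r ^ ((k : ℝ) - a) * ‖iteratedFDeriv ℝ k u x‖) ^ p := by gcongr
      _ = (2 ^ m * M) ^ p * (∑ k ∈ Finset.range (m + 1),
          r ^ ((k : ℝ) - a) * ‖iteratedFDeriv ℝ k u x‖) ^ p := by
          rw [Real.mul_rpow] <;> positivity
      _ ≤ (2 ^ m * M) ^ p * (((m + 1 : ℕ) : ℝ) ^ (p - 1) * KG m a p r u x) := by
          gcongr
          have := Real.rpow_sum_le_const_mul_sum_rpow_of_nonneg (Finset.range (m + 1))
            (f := fun k => r ^ ((k : ℝ) - a) * ‖iteratedFDeriv ℝ k u x‖) hp.le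
            (fun _ _ => by positivity)
          simpa [KG] using this
      _ = _ := by ring
  calc _ ≤ _ := Finset.sum_le_sum key
    _ = _ := by simp; ring

lemma inv_bound {d : ℕ} {ψ : EuclideanSpace ℝ (Fin d) → ℝ} {m : ℕ}
    (hψ : ContDiff ℝ (⊤ : ℕ∞) ψ) (x : EuclideanSpace ℝ (Fin d)) {r M δ : ℝ}
    (hr : 0 < r) (hδ : 0 < δ) (hδ1 : δ ≤ 1) (hx : δ ≤ ψ x) (hM : 1 ≤ M)
    (hb : ∀ k ≤ m, ‖iteratedFDeriv ℝ k ψ x‖ * r ^ k ≤ M) :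
    ∀ n ≤ m, ‖iteratedFDeriv ℝ n (fun y => (ψ y)⁻¹) x‖ * r ^ n ≤
      m.factorial * (m.factorial * δ⁻¹ ^ (m + 1)) * M ^ m := by
  intro n hn
  have hU : IsOpen {y | ψ y ≠ 0} := isOpen_ne_fun hψ.continuous continuous_const
  have ht : IsOpen {y : ℝ | y ≠ 0} := isOpen_ne
  have hxU : x ∈ {y | ψ y ≠ 0} := (hδ.trans_le hx).ne'
  have hxt : ψ x ∈ {y : ℝ | y ≠ 0} := hxU
  have := norm_iteratedFDerivWithin_comp_le (𝕜 := ℝ) (g := fun t : ℝ => t⁻¹) (f := ψ) (n := n)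
    (s := {y | ψ y ≠ 0}) (t := {y : ℝ | y ≠ 0}) (x := x) (N := (⊤ : ℕ∞))
    (C := m.factorial * δ⁻¹ ^ (m + 1)) (D := M / r)
    (contDiffOn_id.inv fun x hx => hx) hψ.contDiffOn (by exact_mod_cast le_top)
    ht.uniqueDiffOn hU.uniqueDiffOn (fun y hy => hy) hxU ?_ ?_
  · rw [iteratedFDerivWithin_of_isOpen _ hU hxU] at this
    calc _ ≤ (n.factorial * (m.factorial * δ⁻¹ ^ (m + 1)) * (M / r) ^ n) * r ^ n := by
          gcongr
          exact this
      _ = n.factorial * (m.factorial * δ⁻¹ ^ (m + 1)) * M ^ n := by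
          rw [mul_assoc, ← mul_pow, div_mul_cancel₀ _ hr.ne']
      _ ≤ _ := by gcongr
  · intro i hi
    rw [iteratedFDerivWithin_of_isOpen _ ht hxt, norm_iteratedFDeriv_eq_norm_iteratedDeriv,
      iteratedDeriv_eq_iterate]
    have e := iter_deriv_inv (𝕜 := ℝ) i (ψ x)
    change ‖deriv^[i] Inv.inv (ψ x)‖ ≤ _
    rw [e]
    have : (ψ x) ^ (-1 - i : ℤ) = (ψ x)⁻¹ ^ (i + 1) := by
      rw [inv_pow, ← zpow_natCast, ← zpow_neg]; congr 1; push_cast; ring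
    rw [this]
    have h0 : 0 < ψ x := hδ.trans_le hx
    simp only [norm_mul, norm_pow, norm_neg, norm_one, one_pow, one_mul, Real.norm_natCast,
      norm_inv, Real.norm_of_nonneg h0.le]
    have him : i ≤ m := hi.trans hn
    calc (i.factorial : ℝ) * (ψ x)⁻¹ ^ (i + 1) ≤ m.factorial * δ⁻¹ ^ (i + 1) := by
          gcongr
      _ ≤ _ := by
          gcongr
          exact (one_le_inv₀ hδ).2 hδ1
  · intro i hi1 hi
    rw [iteratedFDerivWithin_of_isOpen _ hU hxU, div_pow, le_div_iff₀ (by positivity)]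
    exact (hb i (hi.trans hn)).trans (le_self_pow₀ hM (by omega))

lemma KG_le_mul {d : ℕ} {U : Set (EuclideanSpace ℝ (Fin d))} (hU : IsOpen U)
    {ψ : EuclideanSpace ℝ (Fin d) → ℝ} {u : EuclideanSpace ℝ (Fin d) → ℂ} {m : ℕ}
    (hψ : ContDiff ℝ (⊤ : ℕ∞) ψ) (hu : ContDiffOn ℝ (m : ℕ∞) u U)
    {x : EuclideanSpace ℝ (Fin d)} (hx : x ∈ U) {a p r M δ : ℝ} (hp : 1 < p) (hr : 0 < r)
    (hδ : 0 < δ) (hδ1 : δ ≤ 1) (hxδ : δ ≤ ψ x)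
    (hM : 1 ≤ M) (hb : ∀ k ≤ m, ‖iteratedFDeriv ℝ k ψ x‖ * r ^ k ≤ M) :
    KG m a p r u x ≤
      ((m + 1 : ℕ) * ((2 ^ m * (m.factorial * (m.factorial * δ⁻¹ ^ (m + 1)) * M ^ m)) ^ p *
        ((m + 1 : ℕ) : ℝ) ^ (p - 1))) * KG m a p r (fun y => ψ y • u y) x := by
  have hV : IsOpen (U ∩ {y | ψ y ≠ 0}) :=
    hU.inter (isOpen_ne_fun hψ.continuous continuous_const)
  have hxV : x ∈ U ∩ {y | ψ y ≠ 0} := ⟨hx, (hδ.trans_le hxδ).ne'⟩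
  have hψm : ContDiff ℝ (m : ℕ∞) ψ := hψ.of_le (by exact_mod_cast le_top)
  have h := KG_mul_le (a := a) (p := p) (r := r)
    (M := m.factorial * (m.factorial * δ⁻¹ ^ (m + 1)) * M ^ m)
    (ψ := fun y => (ψ y)⁻¹) (u := fun y => ψ y • u y) (m := m) hV
    (hψm.contDiffOn.inv fun y hy => hy.2)
    (hψm.contDiffOn.smul (hu.mono inter_subset_left)) hxV hp hr (by positivity)
    (inv_bound hψ x hr hδ hδ1 hxδ hM hb)
  refine le_trans (le_of_eq ?_) h
  unfold KG
  refine Finset.sum_congr rfl fun n _ => ?_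
  have : (fun y => (ψ y)⁻¹ • ψ y • u y) =ᶠ[nhds x] u := by
    filter_upwards [hV.mem_nhds hxV] with y hy
    exact inv_smul_smul₀ hy.2 _
  rw [(this.iteratedFDeriv ℝ n).eq_of_nhds]

lemma Kterm_aemeas {d : ℕ} {U : Set (EuclideanSpace ℝ (Fin d))} (hU : IsOpen U)
    {σ : EuclideanSpace ℝ (Fin d) → ℝ} (hσ : Measurable σ)
    {u : EuclideanSpace ℝ (Fin d) → ℂ} {m : ℕ} (hu : ContDiffOn ℝ (m : ℕ∞) u U) (a p : ℝ)
    {n : ℕ} (hn : n ≤ m) :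
    AEMeasurable (fun x => ENNReal.ofReal ((σ x ^ ((n : ℝ) - a) * ‖iteratedFDeriv ℝ n u x‖) ^ p))
      (volume.restrict U) := by
  have h1 : ContinuousOn (fun x => ‖iteratedFDeriv ℝ n u x‖) U := by
    have := (hu.continuousOn_iteratedFDerivWithin (m := n) (by exact_mod_cast hn)
      hU.uniqueDiffOn).norm
    exact this.congr fun x hx => by simp only [iteratedFDerivWithin_of_isOpen _ hU hx]
  have h2 := h1.aemeasurable (μ := volume) hU.measurableSet
  exact ENNReal.measurable_ofReal.comp_aemeasurable
    (((hσ.pow_const _).aemeasurable.mul h2).pow_const _)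

lemma KN_eq {d : ℕ} {U : Set (EuclideanSpace ℝ (Fin d))} (hU : IsOpen U)
    {σ : EuclideanSpace ℝ (Fin d) → ℝ} (hσ : Measurable σ) (hpos : ∀ x ∈ U, 0 < σ x)
    {u : EuclideanSpace ℝ (Fin d) → ℂ} {m : ℕ} (hu : ContDiffOn ℝ (m : ℕ∞) u U) (a p : ℝ) :
    KondratievNormP U σ m a p u = ∫⁻ x in U, ENNReal.ofReal (KG m a p (σ x) u x) := by
  unfold KondratievNormP
  rw [← lintegral_finsetSum' _ (fun n hn => Kterm_aemeas hU hσ hu a p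
    (by simpa [Nat.lt_succ_iff] using hn))]
  refine setLIntegral_congr_fun hU.measurableSet fun x hx => ?_
  have := hpos x hx
  simp only [KG]
  rw [ENNReal.ofReal_sum_of_nonneg]
  intro i _
  positivity

lemma KG_aemeas {d : ℕ} {U : Set (EuclideanSpace ℝ (Fin d))} (hU : IsOpen U)
    {σ : EuclideanSpace ℝ (Fin d) → ℝ} (hσ : Measurable σ) (hpos : ∀ x ∈ U, 0 < σ x)
    {u : EuclideanSpace ℝ (Fin d) → ℂ} {m : ℕ} (hu : ContDiffOn ℝ (m : ℕ∞) u U) (a p : ℝ) :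
    AEMeasurable (fun x => ENNReal.ofReal (KG m a p (σ x) u x)) (volume.restrict U) := by
  have : AEMeasurable (fun x => ∑ n ∈ Finset.range (m + 1),
      ENNReal.ofReal ((σ x ^ ((n : ℝ) - a) * ‖iteratedFDeriv ℝ n u x‖) ^ p))
      (volume.restrict U) :=
    Finset.aemeasurable_fun_sum _ (fun n hn => Kterm_aemeas hU hσ hu a p
      (by simpa [Nat.lt_succ_iff] using hn))
  refine this.congr ?_
  filter_upwards [ae_restrict_mem hU.measurableSet] with x hx
  have := hpos x hx
  simp only [KG]
  rw [ENNReal.ofReal_sum_of_nonneg]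
  intro i _
  positivity

lemma main_meas (d : ℕ) (U : Set (EuclideanSpace ℝ (Fin d))) (hU : IsOpen U)
    (σ : EuclideanSpace ℝ (Fin d) → ℝ) (hσ : Measurable σ) (hpos : ∀ x ∈ U, 0 < σ x)
    (ι : Type) (hι : Countable ι) (lvl : ι → ℕ)
    (φ : ι → EuclideanSpace ℝ (Fin d) → ℝ)
    (hφsmooth : ∀ i, ContDiff ℝ (⊤ : ℕ∞) (φ i))
    (hsum : ∀ x ∈ U, HasSum (fun i => φ i x) 1)
    (hder : ∀ n : ℕ, ∃ c : ℝ, 0 < c ∧ ∀ i x,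
      ‖iteratedFDeriv ℝ n (φ i) x‖ ≤ c * (2 : ℝ) ^ (lvl i * n))
    (N : ℕ) (hoverlap : ∀ x, {i | x ∈ tsupport (φ i)}.Finite ∧
      {i | x ∈ tsupport (φ i)}.ncard ≤ N)
    (c₂ : ℝ) (hc₂ : 0 < c₂)
    (hρloc : ∀ i, ∀ x ∈ tsupport (φ i) ∩ U, σ x ≤ c₂ * (2 : ℝ) ^ (-(lvl i : ℤ)))
    (m : ℕ) (p : ℝ) (hp : 1 < p) (a : ℝ) :
    ∃ A B : ℝ, 0 < A ∧ 0 < B ∧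
      ∀ u : EuclideanSpace ℝ (Fin d) → ℂ, ContDiffOn ℝ (m : ℕ∞) u U →
        KondratievNormP U σ m a p u
            ≤ ENNReal.ofReal A *
              ∑' i : ι, KondratievNormP U σ m a p (fun x => φ i x • u x) ∧
        (∑' i : ι, KondratievNormP U σ m a p (fun x => φ i x • u x))
            ≤ ENNReal.ofReal B * KondratievNormP U σ m a p u := by
  choose c hc0 hc using hder
  obtain ⟨M, hM1, hM⟩ : ∃ M : ℝ, 1 ≤ M ∧ ∀ k ≤ m, c k * c₂ ^ k ≤ M := by
    refine ⟨1 + ∑ k ∈ Finset.range (m + 1), c k * c₂ ^ k, ?_, ?_⟩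
    · have : 0 ≤ ∑ k ∈ Finset.range (m + 1), c k * c₂ ^ k :=
        Finset.sum_nonneg fun k _ => by have := hc0 k; positivity
      linarith
    · intro k hk
      have := Finset.single_le_sum (s := Finset.range (m + 1)) (f := fun k => c k * c₂ ^ k)
        (fun k _ => by have := hc0 k; positivity) (Finset.mem_range.2 (Nat.lt_succ_of_le hk))
      linarith
  have hM0 : 0 < M := by linarith
  have hb : ∀ i, ∀ x ∈ tsupport (φ i) ∩ U, ∀ k ≤ m,
      ‖iteratedFDeriv ℝ k (φ i) x‖ * σ x ^ k ≤ M := by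
    intro i x hx k hk
    refine le_trans ?_ (hM k hk)
    have h0 := hpos x hx.2
    have := hc0 k
    calc _ ≤ (c k * (2 : ℝ) ^ (lvl i * k)) * (c₂ * (2 : ℝ) ^ (-(lvl i : ℤ))) ^ k := by
          gcongr
          · exact hc k i x
          · exact hρloc i x hx
      _ = c k * c₂ ^ k := by
          rw [mul_pow, pow_mul, zpow_neg, zpow_natCast, inv_pow]
          field_simp
  have hψ : ∀ i, ContDiff ℝ (m : ℕ∞) (φ i) := fun i =>
    (hφsmooth i).of_le (by exact_mod_cast le_top)
  set δ : ℝ := 1 / (N + 1) with hδ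
  have hδ0 : 0 < δ := by positivity
  have hδ1 : δ ≤ 1 := by
    rw [hδ, div_le_one (by positivity)]
    have : (0 : ℝ) ≤ N := by positivity
    linarith
  set K₁ : ℝ := ((m + 1 : ℕ) * ((2 ^ m * (m.factorial * (m.factorial * δ⁻¹ ^ (m + 1)) * M ^ m)) ^ p
    * ((m + 1 : ℕ) : ℝ) ^ (p - 1))) with hK₁
  set K₂ : ℝ := ((m + 1 : ℕ) * ((2 ^ m * M) ^ p * ((m + 1 : ℕ) : ℝ) ^ (p - 1))) with hK₂
  have hK₁0 : 0 < K₁ := by positivity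
  have hK₂0 : 0 < K₂ := by positivity
  refine ⟨K₁, (N + 1) * K₂, hK₁0, by positivity, fun u hu => ?_⟩
  have hui : ∀ i, ContDiffOn ℝ (m : ℕ∞) (fun x => φ i x • u x) U := fun i =>
    (hψ i).contDiffOn.smul hu
  have e1 : ∑' i : ι, KondratievNormP U σ m a p (fun x => φ i x • u x) =
      ∫⁻ x in U, ∑' i, ENNReal.ofReal (KG m a p (σ x) (fun x => φ i x • u x) x) := by
    rw [lintegral_tsum (fun i => KG_aemeas hU hσ hpos (hui i) a p)]
    exact tsum_congr fun i => KN_eq hU hσ hpos (hui i) a p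
  rw [e1, KN_eq hU hσ hpos hu a p, ← lintegral_const_mul' _ _ ENNReal.ofReal_ne_top,
    ← lintegral_const_mul' _ _ ENNReal.ofReal_ne_top]
  constructor
  · refine setLIntegral_mono_ae' hU.measurableSet (Filter.Eventually.of_forall fun x hx => ?_)
    obtain ⟨i, hi⟩ : ∃ i, δ ≤ φ i x := by
      by_contra! hcon
      have hfin := (hoverlap x).1
      have hs : HasSum (fun i => φ i x) (∑ i ∈ hfin.toFinset, φ i x) := by
        refine hasSum_sum_of_ne_finset_zero fun i hi => ?_
        by_contra h
        exact hi (by simpa using subset_tsupport _ h)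
      have h1 := (hsum x hx).unique hs
      have h2 : ∑ i ∈ hfin.toFinset, φ i x ≤ hfin.toFinset.card • δ :=
        Finset.sum_le_card_nsmul _ _ _ fun i _ => (hcon i).le
      have h3 : (hfin.toFinset.card : ℝ) ≤ N := by
        rw [← Set.ncard_eq_toFinset_card _ hfin]
        exact_mod_cast (hoverlap x).2
      rw [nsmul_eq_mul] at h2
      have h4 : (hfin.toFinset.card : ℝ) * δ ≤ N * δ := by gcongr
      have h5 : (N : ℝ) * δ < 1 := by
        rw [hδ, mul_one_div, div_lt_one (by positivity)]
        linarith
      linarith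
    have hxt : x ∈ tsupport (φ i) := subset_tsupport _ (hδ0.trans_le hi).ne'
    calc ENNReal.ofReal (KG m a p (σ x) u x)
        ≤ ENNReal.ofReal (K₁ * KG m a p (σ x) (fun x => φ i x • u x) x) :=
          ENNReal.ofReal_le_ofReal (KG_le_mul hU (hφsmooth i) hu hx hp (hpos x hx) hδ0 hδ1 hi hM1
            (hb i x ⟨hxt, hx⟩))
      _ = ENNReal.ofReal K₁ * ENNReal.ofReal (KG m a p (σ x) (fun x => φ i x • u x) x) :=
          ENNReal.ofReal_mul hK₁0.le
      _ ≤ _ := by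
          gcongr
          exact ENNReal.le_tsum (f := fun i => ENNReal.ofReal
            (KG m a p (σ x) (fun x => φ i x • u x) x)) i
  · refine setLIntegral_mono_ae' hU.measurableSet (Filter.Eventually.of_forall fun x hx => ?_)
    have hfin := (hoverlap x).1
    have hKG := KG_nonneg m a p (σ x) (hpos x hx) u x
    rw [tsum_eq_sum (s := hfin.toFinset)]
    · calc _ ≤ hfin.toFinset.card • ENNReal.ofReal (K₂ * KG m a p (σ x) u x) := by
            refine Finset.sum_le_card_nsmul _ _ _ fun i hi => ?_
            have hi : x ∈ tsupport (φ i) := by simpa using hi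
            exact ENNReal.ofReal_le_ofReal (KG_mul_le hU (hψ i).contDiffOn hu hx hp (hpos x hx)
              hM0 (hb i x ⟨hi, hx⟩))
        _ ≤ (N + 1) • ENNReal.ofReal (K₂ * KG m a p (σ x) u x) := by
            rw [← Set.ncard_eq_toFinset_card _ hfin]
            exact nsmul_le_nsmul_left zero_le ((hoverlap x).2.trans (Nat.le_succ _))
        _ = _ := by
            rw [← ENNReal.ofReal_nsmul, ← ENNReal.ofReal_mul (by positivity), nsmul_eq_mul]
            rw [mul_assoc (_ : ℝ) K₂, Nat.cast_succ]
    · intro i hi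
      have hi : x ∉ tsupport (φ i) := by simpa using hi
      have : (fun y => φ i y • u y) =ᶠ[nhds x] fun _ => 0 := by
        filter_upwards [notMem_tsupport_iff_eventuallyEq.1 hi] with y hy
        simp [hy]
      rw [ENNReal.ofReal_eq_zero, KG]
      refine le_of_eq (Finset.sum_eq_zero fun n _ => ?_)
      rw [(this.iteratedFDeriv ℝ n).eq_of_nhds]
      simp [Real.zero_rpow (by linarith : p ≠ 0)]

lemma KN_mono_const {d : ℕ} {U : Set (EuclideanSpace ℝ (Fin d))} (hU : MeasurableSet U)
    (ρ σ : EuclideanSpace ℝ (Fin d) → ℝ) (l : ℝ) (hl : 0 < l)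
    (hρ : ∀ x ∈ U, 0 < ρ x) (hσ : ∀ x ∈ U, 0 < σ x)
    (h1 : ∀ x ∈ U, ρ x ≤ l * σ x) (h2 : ∀ x ∈ U, σ x ≤ l * ρ x)
    (m : ℕ) (a p : ℝ) (hp : 1 < p) :
    ∃ C : ℝ, 0 < C ∧ ∀ u, KondratievNormP U ρ m a p u ≤
      ENNReal.ofReal C * KondratievNormP U σ m a p u := by
  have hpt : ∀ (s : ℝ), ∀ x ∈ U, ρ x ^ s ≤ (l ^ s + l ^ (-s)) * σ x ^ s := by
    intro s x hx
    have r0 := hρ x hx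
    have s0 := hσ x hx
    rcases le_total 0 s with hs | hs
    · calc ρ x ^ s ≤ (l * σ x) ^ s := Real.rpow_le_rpow r0.le (h1 x hx) hs
        _ = l ^ s * σ x ^ s := Real.mul_rpow hl.le s0.le
        _ ≤ _ := by gcongr; simp; positivity
    · have h3 : σ x / l ≤ ρ x := by
        rw [div_le_iff₀ hl, mul_comm]; exact h2 x hx
      calc ρ x ^ s ≤ (σ x / l) ^ s :=
            Real.rpow_le_rpow_of_nonpos (by positivity) h3 hs
        _ = l ^ (-s) * σ x ^ s := by
          rw [Real.div_rpow s0.le hl.le, Real.rpow_neg hl.le]; ring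
        _ ≤ _ := by gcongr; simp; positivity
  set T : ℕ → ℝ := fun n => (l ^ ((n : ℝ) - a) + l ^ (-((n : ℝ) - a))) ^ p with hT
  have hT0 : ∀ n, 0 < T n := fun n => by simp only [hT]; positivity
  refine ⟨∑ n ∈ Finset.range (m + 1), T n, Finset.sum_pos (fun n _ => hT0 n) (by simp), ?_⟩
  intro u
  unfold KondratievNormP
  rw [Finset.mul_sum]
  refine Finset.sum_le_sum fun n hn => ?_
  rw [← lintegral_const_mul' _ _ ENNReal.ofReal_ne_top]
  refine setLIntegral_mono_ae' hU (Filter.Eventually.of_forall fun x hx => ?_)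
  have r0 := hρ x hx
  have s0 := hσ x hx
  rw [← ENNReal.ofReal_mul (Finset.sum_nonneg fun n _ => (hT0 n).le)]
  refine ENNReal.ofReal_le_ofReal ?_
  calc _ ≤ ((l ^ ((n : ℝ) - a) + l ^ (-((n : ℝ) - a))) *
        (σ x ^ ((n : ℝ) - a) * ‖iteratedFDeriv ℝ n u x‖)) ^ p := by
        rw [← mul_assoc]
        gcongr
        exact hpt _ x hx
    _ = T n * (σ x ^ ((n : ℝ) - a) * ‖iteratedFDeriv ℝ n u x‖) ^ p := by
        rw [Real.mul_rpow (by positivity) (by positivity)]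
    _ ≤ _ := by
        refine mul_le_mul_of_nonneg_right ?_ (by positivity)
        exact Finset.single_le_sum (f := T) (fun n _ => (hT0 n).le) hn

/-- localization of Kondratiev spaces on `D = ℝ^d \ S` along a resolution of
unity `{φ_{j,l}}` subordinate to a Whitney decomposition (supports `⊆ 2Q_{j,k_l}`, where
`ρ ∼ 2^{-j}`, derivative bounds `|∂^α φ_{j,l}| ≤ c_α 2^{j|α|}`, uniformly bounded overlap):
`‖u‖_{K^m_{a,p}(D)}^p ∼ Σ_{j,l} ‖φ_{j,l} u‖_{K^m_{a,p}(D)}^p` uniformly in `u`. -/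
theorem statement13 (d : ℕ) (hd : 1 ≤ d) (S : Set (EuclideanSpace ℝ (Fin d)))
    (hS : IsClosed S) (hSnull : volume S = 0)
    (ρ : EuclideanSpace ℝ (Fin d) → ℝ) (hρ : ∀ x ∈ Sᶜ, 0 < ρ x ∧ ρ x ≤ 1)
    (ι : Type) (hι : Countable ι) (lvl : ι → ℕ)
    (φ : ι → EuclideanSpace ℝ (Fin d) → ℝ)
    (hφsmooth : ∀ i, ContDiff ℝ (⊤ : ℕ∞) (φ i))
    (hφrange : ∀ i x, 0 ≤ φ i x ∧ φ i x ≤ 1)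
    (hsum : ∀ x ∈ Sᶜ, HasSum (fun i => φ i x) 1)
    (hder : ∀ n : ℕ, ∃ c : ℝ, 0 < c ∧ ∀ i x,
      ‖iteratedFDeriv ℝ n (φ i) x‖ ≤ c * (2 : ℝ) ^ (lvl i * n))
    (N : ℕ) (hoverlap : ∀ x, {i | x ∈ tsupport (φ i)}.Finite ∧
      {i | x ∈ tsupport (φ i)}.ncard ≤ N)
    (c₁ c₂ : ℝ) (hc₁ : 0 < c₁) (hc₁₂ : c₁ ≤ c₂)
    (hρloc : ∀ i, ∀ x ∈ tsupport (φ i) ∩ Sᶜ,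
      c₁ * (2 : ℝ) ^ (-(lvl i : ℤ)) ≤ ρ x ∧ ρ x ≤ c₂ * (2 : ℝ) ^ (-(lvl i : ℤ)))
    (m : ℕ) (p : ℝ) (hp : 1 < p) (a : ℝ) :
    ∃ A B : ℝ, 0 < A ∧ 0 < B ∧
      ∀ u : EuclideanSpace ℝ (Fin d) → ℂ, ContDiffOn ℝ (m : ℕ∞) u Sᶜ →
        KondratievNormP Sᶜ ρ m a p u
            ≤ ENNReal.ofReal A *
              ∑' i : ι, KondratievNormP Sᶜ ρ m a p (fun x => φ i x • u x) ∧
        (∑' i : ι, KondratievNormP Sᶜ ρ m a p (fun x => φ i x • u x))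
            ≤ ENNReal.ofReal B * KondratievNormP Sᶜ ρ m a p u := by
  have hU : IsOpen Sᶜ := hS.isOpen_compl
  have hc₂ : 0 < c₂ := hc₁.trans_le hc₁₂
  set σE : EuclideanSpace ℝ (Fin d) → ENNReal := fun x =>
    ∑' i, ENNReal.ofReal (φ i x * (2 : ℝ) ^ (-(lvl i : ℤ))) with hσE
  set σ : EuclideanSpace ℝ (Fin d) → ℝ := fun x => (σE x).toReal with hσdef
  have hσ : Measurable σ := by
    refine ENNReal.measurable_toReal.comp (Measurable.tsum fun i => ?_)
    exact ENNReal.measurable_ofReal.comp ((hφsmooth i).continuous.measurable.mul_const _)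
  have htot : ∀ x ∈ Sᶜ, ∀ t : ℝ, ∑' i, ENNReal.ofReal (φ i x * t) = ENNReal.ofReal t := by
    intro x hx t
    simp_rw [ENNReal.ofReal_mul (hφrange _ x).1]
    rw [ENNReal.tsum_mul_right, ← ENNReal.ofReal_tsum_of_nonneg (fun i => (hφrange i x).1)
      (hsum x hx).summable, (hsum x hx).tsum_eq]
    simp
  have hup : ∀ x ∈ Sᶜ, σE x ≤ ENNReal.ofReal (ρ x / c₁) := by
    intro x hx
    rw [← htot x hx]
    refine ENNReal.tsum_le_tsum fun i => ENNReal.ofReal_le_ofReal ?_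
    rcases eq_or_ne (φ i x) 0 with h | h
    · simp [h]
    · refine mul_le_mul_of_nonneg_left ?_ (hφrange i x).1
      rw [le_div_iff₀ hc₁, mul_comm]
      exact (hρloc i x ⟨subset_tsupport _ h, hx⟩).1
  have hlo : ∀ x ∈ Sᶜ, ENNReal.ofReal (ρ x / c₂) ≤ σE x := by
    intro x hx
    rw [← htot x hx]
    refine ENNReal.tsum_le_tsum fun i => ENNReal.ofReal_le_ofReal ?_
    rcases eq_or_ne (φ i x) 0 with h | h
    · simp [h]
    · refine mul_le_mul_of_nonneg_left ?_ (hφrange i x).1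
      rw [div_le_iff₀ hc₂, mul_comm]
      exact (hρloc i x ⟨subset_tsupport _ h, hx⟩).2
  have hup' : ∀ x ∈ Sᶜ, σ x ≤ ρ x / c₁ := fun x hx =>
    ENNReal.toReal_le_of_le_ofReal (div_nonneg (hρ x hx).1.le hc₁.le) (hup x hx)
  have hlo' : ∀ x ∈ Sᶜ, ρ x / c₂ ≤ σ x := fun x hx =>
    (ENNReal.ofReal_le_iff_le_toReal
      (ne_top_of_le_ne_top ENNReal.ofReal_ne_top (hup x hx))).1 (hlo x hx)
  have hσpos : ∀ x ∈ Sᶜ, 0 < σ x := fun x hx =>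
    (div_pos (hρ x hx).1 hc₂).trans_le (hlo' x hx)
  have hl : 0 < c₂ + 1 / c₁ := by positivity
  have k1 : ∀ x ∈ Sᶜ, ρ x ≤ (c₂ + 1 / c₁) * σ x := by
    intro x hx
    have h := hlo' x hx
    rw [div_le_iff₀ hc₂, mul_comm] at h
    have : 0 < 1 / c₁ * σ x := mul_pos (by positivity) (hσpos x hx)
    linarith
  have k2 : ∀ x ∈ Sᶜ, σ x ≤ (c₂ + 1 / c₁) * ρ x := by
    intro x hx
    have h := hup' x hx
    have h' : ρ x / c₁ = 1 / c₁ * ρ x := by ring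
    have : 0 < c₂ * ρ x := mul_pos hc₂ (hρ x hx).1
    linarith
  obtain ⟨C, hC, hC'⟩ := KN_mono_const hU.measurableSet ρ σ _ hl (fun x hx => (hρ x hx).1) hσpos
    k1 k2 m a p hp
  obtain ⟨E, hE, hE'⟩ := KN_mono_const hU.measurableSet σ ρ _ hl hσpos (fun x hx => (hρ x hx).1)
    k2 k1 m a p hp
  obtain ⟨A, B, hA, hB, hAB⟩ := main_meas d Sᶜ hU σ hσ hσpos ι hι lvl φ hφsmooth hsum hder N
    hoverlap (c₂ / c₁) (by positivity) (by
      intro i x hx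
      refine (hup' x hx.2).trans ?_
      rw [div_mul_eq_mul_div]
      gcongr
      exact (hρloc i x hx).2) m p hp a
  refine ⟨C * (A * E), C * (B * E), by positivity, by positivity, fun u hu => ?_⟩
  obtain ⟨q1, q2⟩ := hAB u hu
  have s1 : ∑' i : ι, KondratievNormP Sᶜ σ m a p (fun x => φ i x • u x) ≤
      ENNReal.ofReal E * ∑' i : ι, KondratievNormP Sᶜ ρ m a p (fun x => φ i x • u x) := by
    rw [← ENNReal.tsum_mul_left]
    exact ENNReal.tsum_le_tsum fun i => hE' _
  have s2 : ∑' i : ι, KondratievNormP Sᶜ ρ m a p (fun x => φ i x • u x) ≤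
      ENNReal.ofReal C * ∑' i : ι, KondratievNormP Sᶜ σ m a p (fun x => φ i x • u x) := by
    rw [← ENNReal.tsum_mul_left]
    exact ENNReal.tsum_le_tsum fun i => hC' _
  rw [ENNReal.ofReal_mul hC.le, ENNReal.ofReal_mul hA.le, ENNReal.ofReal_mul hC.le,
    ENNReal.ofReal_mul hB.le, mul_assoc, mul_assoc, mul_assoc, mul_assoc]
  exact ⟨(hC' u).trans (mul_le_mul_right (q1.trans (mul_le_mul_right s1 _)) _),
    s2.trans (mul_le_mul_right (q2.trans (mul_le_mul_right (hE' u) _)) _)⟩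
end

section
/- Fix d ≥ 1, 1 < p < ∞, R ∈ (0,1), λ ∈ ℝ, m ∈ ℕ, a ∈ ℝ, and let u_λ(x) = |x|^{a-d/p}(1+|log|x||)^λ on B_R \ {0}. Then for every multiindex α with |α| ≤ m there is a constant C_α such that |∂^α u_λ(x)| ≤ C_α |x|^{a-d/p-|α|} Σ_{j=0}^{|α|} (1+|log|x||)^{λ-j} for all 0 < |x| < R; consequently ∫_{B_R} ||x|^{|α|-a} ∂^α u_λ|^p dx < ∞ for all |α| ≤ m if and only if λp < -1, i.e. u_λ ∈ K^m_{a,p}(B_R \ {0}) if and only if λp < -1. -/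
open MeasureTheory Set

/-- Chain rule bound for composition with an affine map. -/
lemma norm_iteratedFDeriv_comp_affine_le {E G : Type*} [NormedAddCommGroup E] [NormedSpace ℝ E]
    [NormedAddCommGroup G] [NormedSpace ℝ G] (f : E → ℝ) (g : G →L[ℝ] E) (c : E) (x : G) (n : ℕ)
    (hf : ContDiffAt ℝ n f (c + g x)) :
    ‖iteratedFDeriv ℝ n (fun y => f (c + g y)) x‖ ≤
      ‖iteratedFDeriv ℝ n f (c + g x)‖ * ‖g‖ ^ n := by
  set f' : E → ℝ := fun z => f (c + z) with hf'
  have h1 : ContDiffAt ℝ n f' (g x) :=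
    ContDiffAt.comp (g x) (f := fun z => c + z) (g := f) hf (by fun_prop)
  obtain ⟨s, hs, hso, hxs⟩ := eventually_nhds_iff.1 (h1.eventually (by simp))
  have hon : ContDiffOn ℝ n f' s := fun y hy => (hs y hy).contDiffWithinAt
  have hso' : IsOpen (g ⁻¹' s) := hso.preimage g.continuous
  have h2 := g.iteratedFDerivWithin_comp_right hon hso.uniqueDiffOn hso'.uniqueDiffOn hxs
    (i := n) le_rfl
  rw [iteratedFDerivWithin_of_isOpen n hso' hxs, iteratedFDerivWithin_of_isOpen n hso hxs,
    hf', iteratedFDeriv_comp_add_left] at h2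
  have h3 : (fun y => f (c + g y)) = ((fun z => f (c + z)) ∘ g) := rfl
  rw [h3, h2]
  refine (ContinuousMultilinearMap.norm_compContinuousLinearMap_le _ _).trans ?_
  simp

lemma deriv_bound (d : ℕ) (s lam : ℝ) (n : ℕ) : ∃ C : ℝ, 0 < C ∧
      ∀ x : EuclideanSpace ℝ (Fin d), x ≠ 0 → ‖x‖ < 1 →
        ‖iteratedFDeriv ℝ n
            (fun y => ‖y‖ ^ s * (1 + |Real.log ‖y‖|) ^ lam) x‖
          ≤ C * ‖x‖ ^ (s - n) * (1 + |Real.log ‖x‖|) ^ lam := by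
  set E := EuclideanSpace ℝ (Fin d)
  set F : ℝ × E → ℝ := fun q => ‖q.2‖ ^ s * (1 - q.1 * Real.log ‖q.2‖) ^ lam with hF
  have hsm : ∀ q : ℝ × E, ‖q.2‖ = 1 → ContDiffAt ℝ n F q := by
    intro q hq
    have h0 : q.2 ≠ 0 := by
      rw [← norm_ne_zero_iff, hq]; norm_num
    have hN : ContDiffAt ℝ n (fun q : ℝ × E => ‖q.2‖) q := contDiffAt_snd.norm ℝ h0
    refine (hN.rpow_const_of_ne (by simp [hq])).mul (ContDiffAt.rpow_const_of_ne ?_ (by simp [hq]))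
    exact contDiffAt_const.sub (contDiffAt_fst.mul (hN.log (by simp [hq])))
  have hK : IsCompact (Icc (0:ℝ) 1 ×ˢ Metric.sphere (0 : E) 1) :=
    isCompact_Icc.prod (isCompact_sphere _ _)
  obtain ⟨M, hM⟩ := hK.exists_bound_of_continuousOn (f := iteratedFDeriv ℝ n F) (by
    intro q hq
    have : ‖q.2‖ = 1 := by simpa using hq.2
    exact ((hsm q this).continuousAt_iteratedFDeriv le_rfl).continuousWithinAt)
  refine ⟨|M| + 1, by positivity, ?_⟩
  intro x hx hx1
  set r := ‖x‖ with hr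
  have hr0 : 0 < r := norm_pos_iff.2 hx
  have hlog : Real.log r < 0 := Real.log_neg hr0 hx1
  set L := 1 + |Real.log r| with hL
  have hL' : L = 1 - Real.log r := by rw [hL, abs_of_neg hlog]; ring
  have hL1 : 1 ≤ L := by rw [hL']; linarith
  have hL0 : 0 < L := by linarith
  set g : E →L[ℝ] ℝ × E := r⁻¹ • ContinuousLinearMap.inr ℝ ℝ E with hg
  set c : ℝ × E := (L⁻¹, 0) with hc
  have hgy : ∀ y, c + g y = (L⁻¹, r⁻¹ • y) := by
    intro y; simp [hg, hc]
  have hgn : ‖g‖ ≤ r⁻¹ := by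
    rw [hg, norm_smul, Real.norm_of_nonneg (by positivity)]
    have := ContinuousLinearMap.norm_inr_le_one ℝ ℝ E
    exact mul_le_of_le_one_right (by positivity) this
  have hn1 : ‖(c + g x).2‖ = 1 := by
    rw [hgy]
    simp only [norm_smul, norm_inv, Real.norm_of_nonneg hr0.le]
    exact inv_mul_cancel₀ hr0.ne'
  have hev : (fun y : E => ‖y‖ ^ s * (1 + |Real.log ‖y‖|) ^ lam) =ᶠ[nhds x]
      (fun y => (r ^ s * L ^ lam) • F (c + g y)) := by
    have e1 : ∀ᶠ y in nhds x, y ≠ 0 := isOpen_ne.mem_nhds hx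
    have e2 : ∀ᶠ y in nhds x, ‖y‖ < 1 :=
      (isOpen_lt continuous_norm continuous_const).mem_nhds hx1
    filter_upwards [e1, e2] with y hy0 hy1
    have hy : 0 < ‖y‖ := norm_pos_iff.2 hy0
    have hyl : Real.log ‖y‖ < 0 := Real.log_neg hy hy1
    have hny : ‖r⁻¹ • y‖ = ‖y‖ / r := by
      rw [norm_smul, norm_inv, Real.norm_of_nonneg hr0.le]; field_simp
    have hlog2 : 1 - L⁻¹ * Real.log (‖y‖ / r) = (1 - Real.log ‖y‖) / L := by
      rw [Real.log_div hy.ne' hr0.ne']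
      field_simp
      rw [hL']; ring
    rw [hgy]
    simp only [hF, smul_eq_mul, hny, hlog2]
    rw [Real.div_rpow hy.le hr0.le, Real.div_rpow (by linarith) hL0.le, abs_of_neg hyl,
      ← sub_eq_add_neg]
    have := (Real.rpow_pos_of_pos hr0 s).ne'
    have := (Real.rpow_pos_of_pos hL0 lam).ne'
    field_simp
  have hcd : ContDiffAt ℝ n (fun y => F (c + g y)) x :=
    ContDiffAt.comp x (f := fun y => c + g y) (g := F) (hsm _ hn1) (by fun_prop)
  rw [(hev.iteratedFDeriv (𝕜 := ℝ) n).self_of_nhds, iteratedFDeriv_const_smul_apply' hcd, norm_smul,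
    Real.norm_of_nonneg (by positivity)]
  have hb := norm_iteratedFDeriv_comp_affine_le F g c x n (hsm _ hn1)
  have hM' : ‖iteratedFDeriv ℝ n F (c + g x)‖ ≤ |M| + 1 := by
    have := hM (c + g x) ⟨by
      rw [hgy]; exact ⟨by positivity, inv_le_one_of_one_le₀ hL1⟩, by simpa using hn1⟩
    linarith [le_abs_self M]
  calc r ^ s * L ^ lam * ‖iteratedFDeriv ℝ n (fun y => F (c + g y)) x‖
      ≤ r ^ s * L ^ lam * ((|M| + 1) * r⁻¹ ^ n) := by
        gcongr
        refine hb.trans ?_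
        gcongr
    _ = (|M| + 1) * r ^ (s - n) * L ^ lam := by
        rw [Real.rpow_sub hr0, Real.rpow_natCast, inv_pow]
        field_simp

lemma integrable_iff_aux (d : ℕ) (hd : 1 ≤ d) (R : ℝ) (hR0 : 0 < R) (hR1 : R < 1) (q : ℝ) :
    (∫⁻ x in (Metric.ball (0 : EuclideanSpace ℝ (Fin d)) R) \ {0},
      ENNReal.ofReal (‖x‖ ^ (-(d:ℝ)) * (1 + |Real.log ‖x‖|) ^ q)) < ⊤ ↔ q < -1 := by
  have : Nonempty (Fin d) := ⟨⟨0, hd⟩⟩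
  have hmeas : Measurable (fun x : EuclideanSpace ℝ (Fin d) =>
      ‖x‖ ^ (-(d:ℝ)) * (1 + |Real.log ‖x‖|) ^ q) := by
    have : Measurable (fun x : EuclideanSpace ℝ (Fin d) => |Real.log ‖x‖|) :=
      (Real.measurable_log.comp measurable_norm).abs
    fun_prop
  have hpos : ∀ x : EuclideanSpace ℝ (Fin d),
      0 ≤ ‖x‖ ^ (-(d:ℝ)) * (1 + |Real.log ‖x‖|) ^ q := fun x => by positivity
  have hset : (Metric.ball (0 : EuclideanSpace ℝ (Fin d)) R \ {0} : Set _) =ᵐ[volume]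
      Metric.ball (0 : EuclideanSpace ℝ (Fin d)) R := sdiff_null_ae_eq_self (by simp)
  rw [Measure.restrict_congr_set hset,
    ← hasFiniteIntegral_iff_ofReal (Filter.Eventually.of_forall hpos)]
  have h1 : HasFiniteIntegral (fun x : EuclideanSpace ℝ (Fin d) =>
      ‖x‖ ^ (-(d:ℝ)) * (1 + |Real.log ‖x‖|) ^ q) (volume.restrict (Metric.ball 0 R)) ↔
      IntegrableOn (fun x : EuclideanSpace ℝ (Fin d) =>
        (fun r : ℝ => r ^ (-(d:ℝ)) * (1 + |Real.log r|) ^ q) ‖x‖) (Metric.ball 0 R) :=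
    ⟨fun h => ⟨hmeas.aestronglyMeasurable, h⟩, fun h => h.2⟩
  rw [h1, integrableOn_fun_norm_addHaar volume
    (f := fun r : ℝ => r ^ (-(d:ℝ)) * (1 + |Real.log r|) ^ q), finrank_euclideanSpace_fin]
  have himg : Set.image (fun t : ℝ => Real.exp (1 - t)) (Ioi (1 - Real.log R)) = Ioo 0 R := by
    ext r
    simp only [mem_image, mem_Ioi, mem_Ioo]
    constructor
    · rintro ⟨t, ht, rfl⟩
      exact ⟨Real.exp_pos _, (Real.lt_log_iff_exp_lt hR0).1 (by linarith)⟩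
    · rintro ⟨h0, h1⟩
      refine ⟨1 - Real.log r, ?_, ?_⟩
      · linarith [Real.log_lt_log h0 h1]
      · rw [sub_sub_cancel, Real.exp_log h0]
  rw [← himg, integrableOn_image_iff_integrableOn_abs_deriv_smul
    (f' := fun t => -Real.exp (1 - t)) measurableSet_Ioi]
  · have hc : 0 < 1 - Real.log R := by linarith [Real.log_neg hR0 hR1]
    rw [← integrableOn_Ioi_rpow_iff hc]
    refine integrableOn_congr_fun ?_ measurableSet_Ioi
    intro t ht
    have ht1 : 1 < t := by
      have := Real.log_neg hR0 hR1
      simp only [mem_Ioi] at ht; linarith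
    have he := Real.exp_pos (1 - t)
    simp only [smul_eq_mul, abs_neg, abs_of_pos he, Real.log_exp]
    rw [abs_of_neg (by linarith : 1 - t < 0), Real.rpow_neg he.le, Real.rpow_natCast]
    have h2 : 1 + -(1 - t) = t := by ring
    rw [h2]
    obtain ⟨k, rfl⟩ : ∃ k, d = k + 1 := ⟨d - 1, by omega⟩
    simp only [Nat.add_sub_cancel]
    field_simp
    rw [pow_succ, mul_comm]
  · intro t _
    have := ((hasDerivAt_id t).const_sub 1).exp
    simpa using this.hasDerivWithinAt
  · intro t _ t' _ h
    have := Real.exp_injective h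
    linarith

/-- for `u_λ(x) = |x|^{a-d/p}(1+|log|x||)^λ` on the punctured ball
`B_R \ {0}` (`R < 1`): (i) derivative bounds
`|∂^α u_λ(x)| ≤ C_α |x|^{a-d/p-|α|} Σ_{j=0}^{|α|} (1+|log|x||)^{λ-j}` for `|α| ≤ m`;
and (ii) `∫_{B_R} ||x|^{|α|-a} ∂^α u_λ|^p dx < ∞` for all `|α| ≤ m` iff `λp < -1`,
i.e. `u_λ ∈ K^m_{a,p}(B_R \ {0})` iff `λp < -1`. -/
theorem statement19 (d : ℕ) (hd : 1 ≤ d) (p : ℝ) (hp : 1 < p)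
    (R : ℝ) (hR0 : 0 < R) (hR1 : R < 1) (lam : ℝ) (m : ℕ) (a : ℝ) :
    (∀ n : ℕ, n ≤ m → ∃ C : ℝ, 0 < C ∧
      ∀ x : EuclideanSpace ℝ (Fin d), x ≠ 0 → ‖x‖ < R →
        ‖iteratedFDeriv ℝ n
            (fun y => ‖y‖ ^ (a - (d : ℝ) / p) * (1 + |Real.log ‖y‖|) ^ lam) x‖
          ≤ C * ‖x‖ ^ (a - (d : ℝ) / p - n) *
            ∑ j ∈ Finset.range (n + 1), (1 + |Real.log ‖x‖|) ^ (lam - j)) ∧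
    ((∀ n : ℕ, n ≤ m →
        (∫⁻ x in (Metric.ball (0 : EuclideanSpace ℝ (Fin d)) R) \ {0},
          ENNReal.ofReal ((‖x‖ ^ ((n : ℝ) - a) *
            ‖iteratedFDeriv ℝ n
              (fun y => ‖y‖ ^ (a - (d : ℝ) / p) * (1 + |Real.log ‖y‖|) ^ lam) x‖) ^ p)) < ⊤)
      ↔ lam * p < -1) := by
  have key := deriv_bound d (a - (d : ℝ) / p) lam
  have hp0 : 0 < p := by linarith
  have haux := integrable_iff_aux d hd R hR0 hR1 (lam * p)
  have hpow : ∀ (C : ℝ) (n : ℕ) (x : EuclideanSpace ℝ (Fin d)), 0 < C → x ≠ 0 →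
      (‖x‖ ^ ((n : ℝ) - a) * (C * ‖x‖ ^ (a - (d : ℝ) / p - n) *
        (1 + |Real.log ‖x‖|) ^ lam)) ^ p =
      C ^ p * (‖x‖ ^ (-(d:ℝ)) * (1 + |Real.log ‖x‖|) ^ (lam * p)) := by
    intro C n x hC hx
    have hx0 : 0 < ‖x‖ := norm_pos_iff.2 hx
    have h1 : ‖x‖ ^ ((n : ℝ) - a) * (C * ‖x‖ ^ (a - (d : ℝ) / p - n) *
        (1 + |Real.log ‖x‖|) ^ lam) =
        C * (‖x‖ ^ (-((d : ℝ) / p)) * (1 + |Real.log ‖x‖|) ^ lam) := by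
      have : -((d : ℝ) / p) = ((n : ℝ) - a) + (a - (d : ℝ) / p - n) := by ring
      rw [this, Real.rpow_add hx0]; ring
    rw [h1, Real.mul_rpow hC.le (by positivity), Real.mul_rpow (by positivity) (by positivity),
      ← Real.rpow_mul hx0.le, ← Real.rpow_mul (by positivity)]
    congr 3
    field_simp
  have hms : MeasurableSet ((Metric.ball (0 : EuclideanSpace ℝ (Fin d)) R) \ {0}) :=
    measurableSet_ball.diff (measurableSet_singleton _)
  refine ⟨?_, ?_, ?_⟩
  · intro n _
    obtain ⟨C, hC, hb⟩ := key n
    refine ⟨C, hC, fun x hx hxR => (hb x hx (hxR.trans hR1)).trans ?_⟩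
    gcongr
    have := Finset.single_le_sum (f := fun j : ℕ => (1 + |Real.log ‖x‖|) ^ (lam - j))
      (fun i _ => by positivity) (Finset.mem_range.2 (Nat.succ_pos n))
    simpa using this
  · intro h
    rw [← haux]
    refine lt_of_eq_of_lt ?_ (h 0 (Nat.zero_le m))
    refine setLIntegral_congr_fun hms ?_
    intro x hx
    have hx0 : x ≠ 0 := by simpa using hx.2
    have := hpow 1 0 x one_pos hx0
    simp only [norm_iteratedFDeriv_zero]
    rw [Real.norm_of_nonneg (by positivity)]
    congr 1
    simp only [Real.one_rpow, one_mul, Nat.cast_zero, sub_zero] at this ⊢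
    exact this.symm
  · intro h n _
    rw [← haux] at h
    obtain ⟨C, hC, hb⟩ := key n
    refine lt_of_le_of_lt (setLIntegral_mono' hms (g := fun x => ENNReal.ofReal (C ^ p) *
      ENNReal.ofReal (‖x‖ ^ (-(d:ℝ)) * (1 + |Real.log ‖x‖|) ^ (lam * p))) ?_) ?_
    · intro x hx
      have hx0 : x ≠ 0 := by simpa using hx.2
      have hx1 : ‖x‖ < R := by simpa using hx.1
      rw [← ENNReal.ofReal_mul (by positivity), ← hpow C n x hC hx0]
      apply ENNReal.ofReal_le_ofReal
      apply Real.rpow_le_rpow (by positivity) _ hp0.le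
      gcongr
      exact hb x hx0 (hx1.trans hR1)
    · rw [lintegral_const_mul' _ _ ENNReal.ofReal_ne_top]
      exact ENNReal.mul_lt_top ENNReal.ofReal_lt_top h
end
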